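/- Let m, p, s, t, k be natural numbers with s < t, k > 2·p and k > 2·t, set n = p, let a, b ∈ ℂ with a ≠ 0 and b ≠ 0, and let φ(z) = a·z^p·conj(z)^n + b·z^s·conj(z)^t. If ⟨T_φ(T_φ (w ↦ w^k)), T_φ (w ↦ w^k)⟩ = ⟨T_{conj∘φ}(T_φ (w ↦ w^k)), T_{conj∘φ} (w ↦ w^k)⟩, then (p+k+m)!·(t+k+m)!²/((k+m)!·(t+k+m−s)!) = (s+k+m)!²·(s+k+m+p−t)!/((s+k+m−t)!)². -/

import Mathlib

/-!
Moments of the weight are orthogonal: `∫ w ^ i * conj w ^ j * |w| ^ (2m) * exp (-|w|²)` is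
`π (i + m)!` when `i = j` (`integral_norm_pow_mul_exp`) and vanishes otherwise by rotation
invariance (`integral_monomial_of_ne`). Integrating the kernel series term by term, which is
justified by dominated convergence since `|K_m(z, w)| ≤ exp (|z| |w|)`, gives
`T_{z^i conj(z)^j} z^k = (i + k + m)! / (i + k - j + m)! * z ^ (i + k - j)`
(`integral_monomial_mul_kernel`, `fsToeplitz_sum`).

With `d = t - s`, write `T_φ z^k = a A_k z^k + b B_k z^(k-d)` and
`T_{conj φ} z^k = conj a A_k z^k + conj b C_k z^(k+d)`, and put `N_k = ⟨z^k, z^k⟩ = π (k + m)!`.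
Expanding both pairings, the terms in `|a|² a` coincide, and so do the terms
`a |b|² A_k B_k² N_(k-d)` and `a |b|² A_k B_k C_(k-d) N_k`, because
`B_k N_(k-d) = C_(k-d) N_k = π (s + k + m)!` expresses that `T_{conj φ}` is the adjoint of `T_φ`.
Cancelling `a |b|² ≠ 0` leaves `B_k² A_(k-d) N_(k-d) = A_k C_k² N_(k+d)`, which is the claim.
-/

open MeasureTheory Complex ComplexOrder

/-- Weight function: `|z|^{2m} e^{-|z|^2}` as a complex number. -/
noncomputable def fsWt (m : ℕ) (z : ℂ) : ℂ :=
  ((‖z‖ : ℝ) : ℂ) ^ (2 * m) * ((Real.exp (-‖z‖ ^ 2) : ℝ) : ℂ)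

/-- Fock–Sobolev reproducing kernel `K_m(z,w)`. -/
noncomputable def fsKernel (m : ℕ) (z w : ℂ) : ℂ :=
  ∑' j : ℕ, ((m.factorial : ℂ) / ((j + m).factorial : ℂ)) * (z * starRingEnd ℂ w) ^ j

/-- Toeplitz operator with symbol `ψ` acting on `f`, evaluated at `z`. -/
noncomputable def fsToeplitz (m : ℕ) (ψ f : ℂ → ℂ) (z : ℂ) : ℂ :=
  (1 / ((Real.pi : ℂ) * (m.factorial : ℂ))) *
    ∫ w : ℂ, ψ w * f w * fsKernel m z w * fsWt m w

/-- Fock–Sobolev pairing `⟨g, h⟩`. -/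
noncomputable def fsPair (m : ℕ) (g h : ℂ → ℂ) : ℂ :=
  ∫ z : ℂ, g z * starRingEnd ℂ (h z) * fsWt m z

/-- `‖g‖² = ⟨g, g⟩`. -/
noncomputable def fsNormSq (m : ℕ) (g : ℂ → ℂ) : ℂ := fsPair m g g

/-- Radial Gaussian moments are integrable; the rate `b` leaves room to absorb the growth of the
reproducing kernel. -/
lemma integrable_norm_pow_mul_exp (N : ℕ) {b : ℝ} (hb : 0 < b) :
    Integrable (fun w : ℂ => ‖w‖ ^ N * Real.exp (-b * ‖w‖ ^ 2)) := by
  have h := Complex.integral_rpow_mul_exp_neg_mul_rpow (p := 2) (q := N) (b := b) (by norm_num)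
    (by have : (0 : ℝ) ≤ N := N.cast_nonneg
        linarith) hb
  simp only [Real.rpow_natCast, Real.rpow_ofNat] at h
  -- An integral with a nonzero value is the integral of an integrable function.
  refine Integrable.of_integral_ne_zero ?_
  rw [h]
  have := Real.Gamma_pos_of_pos (s := ((N : ℝ) + 2) / 2) (by positivity)
  positivity

lemma integral_norm_pow_mul_exp (N : ℕ) :
    ∫ w : ℂ, ‖w‖ ^ (2 * N) * Real.exp (-‖w‖ ^ 2) = Real.pi * (N.factorial : ℝ) := by
  have h := Complex.integral_rpow_mul_exp_neg_rpow (p := 2) (q := (2 * N : ℕ)) (by norm_num)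
    (by have : (0 : ℝ) ≤ (2 * N : ℕ) := Nat.cast_nonneg _
        linarith)
  simp only [Real.rpow_natCast, Real.rpow_ofNat] at h
  rw [h, show (((2 * N : ℕ) : ℝ) + 2) / 2 = N + 1 by push_cast; ring, Real.Gamma_nat_eq_factorial]
  ring

lemma norm_fsWt (m : ℕ) (w : ℂ) : ‖fsWt m w‖ = ‖w‖ ^ (2 * m) * Real.exp (-‖w‖ ^ 2) := by
  rw [fsWt, norm_mul, norm_pow, Complex.norm_real, Complex.norm_real, norm_norm,
    Real.norm_of_nonneg (Real.exp_nonneg _)]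

lemma continuous_fsWt (m : ℕ) : Continuous (fsWt m) := by
  unfold fsWt
  fun_prop

lemma integrable_monomial (m i j : ℕ) :
    Integrable (fun w : ℂ => w ^ i * (starRingEnd ℂ w) ^ j * fsWt m w) := by
  have hc := continuous_fsWt m
  refine (integrable_norm_pow_mul_exp (i + j + 2 * m) one_pos).mono'
    (Continuous.aestronglyMeasurable (by fun_prop)) (Filter.Eventually.of_forall fun w => ?_)
  simp only [norm_mul, norm_pow, RCLike.norm_conj, norm_fsWt]
  apply le_of_eq
  ring_nf

/-- Off-diagonal moments vanish: rotating the plane by the angle `π / (i - j)` preserves area but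
flips the sign of the integrand. -/
lemma integral_monomial_of_ne (m : ℕ) {i j : ℕ} (hij : i ≠ j) :
    ∫ w : ℂ, w ^ i * (starRingEnd ℂ w) ^ j * fsWt m w = 0 := by
  have hd : ((i : ℂ) - j) ≠ 0 := sub_ne_zero.mpr (by exact_mod_cast hij)
  set θ : ℝ := Real.pi / ((i : ℝ) - j) with hθ
  set c : Circle := Circle.exp θ with hc
  have hfac : (c : ℂ) ^ i * (starRingEnd ℂ (c : ℂ)) ^ j = -1 := by
    rw [hc, Circle.coe_exp, ← Complex.exp_conj, ← Complex.exp_nat_mul, ← Complex.exp_nat_mul,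
      ← Complex.exp_add, ← Complex.exp_pi_mul_I]
    congr 1
    rw [hθ]
    simp only [map_mul, Complex.conj_ofReal, Complex.conj_I]
    push_cast
    field_simp
    ring
  have h := (rotation c).measurePreserving.integral_comp
    (rotation c).toHomeomorph.measurableEmbedding
    (fun w : ℂ => w ^ i * (starRingEnd ℂ w) ^ j * fsWt m w)
  have h2 : ∀ w : ℂ, (rotation c w) ^ i * (starRingEnd ℂ (rotation c w)) ^ j *
      fsWt m (rotation c w) = -(w ^ i * (starRingEnd ℂ w) ^ j * fsWt m w) := by
    intro w
    have h3 : fsWt m (rotation c w) = fsWt m w := by simp only [fsWt, LinearIsometryEquiv.norm_map]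
    rw [h3, rotation_apply, map_mul, mul_pow, mul_pow]
    linear_combination (w ^ i * (starRingEnd ℂ w) ^ j * fsWt m w) * hfac
  simp only [h2, integral_neg] at h
  linear_combination (-1 / 2 : ℂ) * h

lemma integral_monomial (m i j : ℕ) :
    ∫ w : ℂ, w ^ i * (starRingEnd ℂ w) ^ j * fsWt m w =
      if i = j then (Real.pi : ℂ) * ((i + m).factorial : ℂ) else 0 := by
  split_ifs with hij
  · subst hij
    have h : ∀ w : ℂ, w ^ i * (starRingEnd ℂ w) ^ i * fsWt m w =
        ((‖w‖ ^ (2 * (i + m)) * Real.exp (-‖w‖ ^ 2) : ℝ) : ℂ) := by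
      intro w
      rw [← mul_pow, Complex.mul_conj, Complex.normSq_eq_norm_sq, fsWt]
      push_cast
      ring
    simp only [h]
    rw [integral_complex_ofReal, integral_norm_pow_mul_exp]
    push_cast
    rfl
  · exact integral_monomial_of_ne m hij

/-- The Gaussian dominates the kernel, which grows at most like `exp (|z| |w|)`. -/
lemma integrable_dominating (N : ℕ) (r : ℝ) :
    Integrable (fun w : ℂ => ‖w‖ ^ N * Real.exp (-‖w‖ ^ 2) * Real.exp (r * ‖w‖)) := by
  refine ((integrable_norm_pow_mul_exp N (b := 1 / 2) (by norm_num)).const_mul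
    (Real.exp (r ^ 2 / 2))).mono' (Continuous.aestronglyMeasurable (by fun_prop))
    (Filter.Eventually.of_forall fun w => ?_)
  rw [Real.norm_of_nonneg (by positivity), mul_left_comm, mul_assoc, ← Real.exp_add,
    ← Real.exp_add]
  refine mul_le_mul_of_nonneg_left (Real.exp_le_exp.mpr ?_) (by positivity)
  nlinarith [sq_nonneg (r - ‖w‖)]

lemma norm_kernel_coeff_le (m l : ℕ) :
    ‖(m.factorial : ℂ) / ((l + m).factorial : ℂ)‖ ≤ 1 / (l.factorial : ℝ) := by
  rw [norm_div, Complex.norm_natCast, Complex.norm_natCast,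
    div_le_div_iff₀ (by positivity) (by positivity), one_mul, mul_comm]
  exact_mod_cast Nat.le_of_dvd (Nat.factorial_pos _) (Nat.factorial_mul_factorial_dvd_factorial_add l m)

lemma norm_kernel_term_le (m l : ℕ) (z w : ℂ) :
    ‖((m.factorial : ℂ) / ((l + m).factorial : ℂ)) * (z * starRingEnd ℂ w) ^ l‖ ≤
      (‖z‖ * ‖w‖) ^ l / (l.factorial : ℝ) := by
  rw [norm_mul, norm_pow, norm_mul, RCLike.norm_conj]
  calc _ ≤ 1 / (l.factorial : ℝ) * (‖z‖ * ‖w‖) ^ l := by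
        gcongr
        exact norm_kernel_coeff_le m l
    _ = _ := by ring

lemma hasSum_fsKernel (m : ℕ) (z w : ℂ) :
    HasSum (fun l : ℕ => ((m.factorial : ℂ) / ((l + m).factorial : ℂ)) *
      (z * starRingEnd ℂ w) ^ l) (fsKernel m z w) :=
  (Summable.of_norm_bounded (Real.summable_pow_div_factorial (‖z‖ * ‖w‖))
    (fun l => norm_kernel_term_le m l z w)).hasSum

lemma norm_fsKernel_le (m : ℕ) (z w : ℂ) : ‖fsKernel m z w‖ ≤ Real.exp (‖z‖ * ‖w‖) := by
  have h := NormedSpace.expSeries_div_hasSum_exp (𝔸 := ℝ) (‖z‖ * ‖w‖)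
  rw [← Real.exp_eq_exp_ℝ] at h
  exact tsum_of_norm_bounded h (fun l => norm_kernel_term_le m l z w)

lemma aestronglyMeasurable_fsKernel (m : ℕ) (z : ℂ) :
    AEStronglyMeasurable (fun w : ℂ => fsKernel m z w) := by
  refine aestronglyMeasurable_of_tendsto_ae (Filter.atTop : Filter (Finset ℕ))
    (f := fun S w => ∑ l ∈ S, ((m.factorial : ℂ) / ((l + m).factorial : ℂ)) *
      (z * starRingEnd ℂ w) ^ l)
    (fun S => Continuous.aestronglyMeasurable (by fun_prop))
    (Filter.Eventually.of_forall fun w => hasSum_fsKernel m z w)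

lemma integrable_monomial_mul_kernel (m i j : ℕ) (z : ℂ) :
    Integrable (fun w : ℂ => w ^ i * (starRingEnd ℂ w) ^ j * fsKernel m z w * fsWt m w) := by
  refine (integrable_dominating (i + j + 2 * m) ‖z‖).mono' ?_
    (Filter.Eventually.of_forall fun w => ?_)
  · refine AEStronglyMeasurable.mul (AEStronglyMeasurable.mul
      (Continuous.aestronglyMeasurable (by fun_prop)) (aestronglyMeasurable_fsKernel m z))
      (continuous_fsWt m).aestronglyMeasurable
  · simp only [norm_mul, norm_pow, RCLike.norm_conj, norm_fsWt]
    calc _ ≤ ‖w‖ ^ i * ‖w‖ ^ j * Real.exp (‖z‖ * ‖w‖) *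
          (‖w‖ ^ (2 * m) * Real.exp (-‖w‖ ^ 2)) := by
          gcongr
          exact norm_fsKernel_le m z w
      _ = _ := by ring

/-- Integrating the kernel series term by term, orthogonality of the moments leaves only the
term of index `i - j`. -/
lemma integral_monomial_mul_kernel (m : ℕ) {i j : ℕ} (hij : j ≤ i) (z : ℂ) :
    ∫ w : ℂ, w ^ i * (starRingEnd ℂ w) ^ j * fsKernel m z w * fsWt m w =
      (Real.pi : ℂ) * (m.factorial : ℂ) *
        (((i + m).factorial : ℂ) / ((i - j + m).factorial : ℂ) * z ^ (i - j)) := by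
  have hwt := continuous_fsWt m
  have hb : ∀ w : ℂ, HasSum (fun l : ℕ => ‖w‖ ^ (i + j + 2 * m) * Real.exp (-‖w‖ ^ 2) *
      ((‖z‖ * ‖w‖) ^ l / (l.factorial : ℝ)))
      (‖w‖ ^ (i + j + 2 * m) * Real.exp (-‖w‖ ^ 2) * Real.exp (‖z‖ * ‖w‖)) := by
    intro w
    have h := NormedSpace.expSeries_div_hasSum_exp (𝔸 := ℝ) (‖z‖ * ‖w‖)
    rw [← Real.exp_eq_exp_ℝ] at h
    exact h.mul_left _
  have key := hasSum_integral_of_dominated_convergence (μ := (volume : Measure ℂ))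
    (F := fun (l : ℕ) (w : ℂ) => w ^ i * (starRingEnd ℂ w) ^ j *
      (((m.factorial : ℂ) / ((l + m).factorial : ℂ)) * (z * starRingEnd ℂ w) ^ l) * fsWt m w)
    (f := fun w => w ^ i * (starRingEnd ℂ w) ^ j * fsKernel m z w * fsWt m w)
    (fun l w => ‖w‖ ^ (i + j + 2 * m) * Real.exp (-‖w‖ ^ 2) *
      ((‖z‖ * ‖w‖) ^ l / (l.factorial : ℝ)))
    (fun l => Continuous.aestronglyMeasurable (by fun_prop))
    (fun l => Filter.Eventually.of_forall fun w => by
      rw [norm_mul, norm_mul, norm_mul, norm_pow, norm_pow, RCLike.norm_conj, norm_fsWt]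
      calc _ ≤ ‖w‖ ^ i * ‖w‖ ^ j * ((‖z‖ * ‖w‖) ^ l / (l.factorial : ℝ)) *
            (‖w‖ ^ (2 * m) * Real.exp (-‖w‖ ^ 2)) := by
            gcongr
            exact norm_kernel_term_le m l z w
        _ = _ := by ring)
    (Filter.Eventually.of_forall fun w => (hb w).summable)
    (by simpa only [(hb _).tsum_eq] using integrable_dominating (i + j + 2 * m) ‖z‖)
    (Filter.Eventually.of_forall fun w =>
      ((hasSum_fsKernel m z w).mul_left _).mul_right _)
  have hterm : ∀ l : ℕ, ∫ w : ℂ, w ^ i * (starRingEnd ℂ w) ^ j *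
      (((m.factorial : ℂ) / ((l + m).factorial : ℂ)) * (z * starRingEnd ℂ w) ^ l) * fsWt m w =
      ((m.factorial : ℂ) / ((l + m).factorial : ℂ)) * z ^ l *
        (if i = j + l then (Real.pi : ℂ) * ((i + m).factorial : ℂ) else 0) := by
    intro l
    rw [← integral_monomial, ← integral_const_mul]
    congr 1
    ext w
    ring
  rw [← key.tsum_eq, tsum_eq_single (i - j)]
  · rw [hterm, if_pos (by omega)]
    ring
  · intro l hl
    rw [hterm, if_neg (by omega), mul_zero]

/-- The action of a Toeplitz operator whose symbol is a polynomial in `z` and `conj z` on a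
polynomial. The condition `hle` excludes monomials sent to zero. -/
lemma fsToeplitz_sum {ι κ : Type} [Fintype ι] [Fintype κ] (m : ℕ) (c : ι → ℂ) (i j : ι → ℕ)
    (d : κ → ℂ) (e : κ → ℕ) (hle : ∀ x y, j x ≤ i x + e y) (z : ℂ) :
    fsToeplitz m (fun w => ∑ x, c x * w ^ i x * (starRingEnd ℂ w) ^ j x)
      (fun w => ∑ y, d y * w ^ e y) z =
    ∑ x, ∑ y, c x * d y * (((i x + e y + m).factorial : ℂ) /
      ((i x + e y - j x + m).factorial : ℂ)) * z ^ (i x + e y - j x) := by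
  have h : ∀ w : ℂ, (∑ x, c x * w ^ i x * (starRingEnd ℂ w) ^ j x) * (∑ y, d y * w ^ e y) *
      fsKernel m z w * fsWt m w = ∑ x, ∑ y, c x * d y *
        (w ^ (i x + e y) * (starRingEnd ℂ w) ^ j x * fsKernel m z w * fsWt m w) := by
    intro w
    rw [Finset.sum_mul_sum, Finset.sum_mul, Finset.sum_mul]
    refine Finset.sum_congr rfl fun x _ => ?_
    rw [Finset.sum_mul, Finset.sum_mul]
    refine Finset.sum_congr rfl fun y _ => ?_
    ring
  have hpi : (Real.pi : ℂ) ≠ 0 := by exact_mod_cast Real.pi_ne_zero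
  have hm : (m.factorial : ℂ) ≠ 0 := by exact_mod_cast m.factorial_ne_zero
  unfold fsToeplitz
  simp only [h]
  rw [integral_finsetSum _ fun x _ => integrable_finsetSum _ fun y _ =>
    (integrable_monomial_mul_kernel m _ _ z).const_mul _, Finset.mul_sum]
  refine Finset.sum_congr rfl fun x _ => ?_
  rw [integral_finsetSum _ fun y _ =>
    (integrable_monomial_mul_kernel m _ _ z).const_mul _, Finset.mul_sum]
  refine Finset.sum_congr rfl fun y _ => ?_
  rw [integral_const_mul, integral_monomial_mul_kernel m (hle x y)]
  field_simp

lemma fsPair_sum {ι κ : Type} [Fintype ι] [Fintype κ] (m : ℕ) (c : ι → ℂ) (i : ι → ℕ)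
    (d : κ → ℂ) (e : κ → ℕ) :
    fsPair m (fun z => ∑ x, c x * z ^ i x) (fun z => ∑ y, d y * z ^ e y) =
    ∑ x, ∑ y, c x * starRingEnd ℂ (d y) *
      (if i x = e y then (Real.pi : ℂ) * ((i x + m).factorial : ℂ) else 0) := by
  have h : ∀ w : ℂ, (∑ x, c x * w ^ i x) * starRingEnd ℂ (∑ y, d y * w ^ e y) * fsWt m w =
      ∑ x, ∑ y, c x * starRingEnd ℂ (d y) *
        (w ^ i x * (starRingEnd ℂ w) ^ e y * fsWt m w) := by
    intro w
    rw [map_sum, Finset.sum_mul_sum, Finset.sum_mul]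
    refine Finset.sum_congr rfl fun x _ => ?_
    rw [Finset.sum_mul]
    refine Finset.sum_congr rfl fun y _ => ?_
    rw [map_mul, map_pow]
    ring
  unfold fsPair
  simp only [h]
  rw [integral_finsetSum _ fun x _ => integrable_finsetSum _ fun y _ =>
    (integrable_monomial m _ _).const_mul _]
  refine Finset.sum_congr rfl fun x _ => ?_
  rw [integral_finsetSum _ fun y _ => (integrable_monomial m _ _).const_mul _]
  refine Finset.sum_congr rfl fun y _ => ?_
  rw [integral_const_mul, integral_monomial]

/-- `fsToeplitz_sum` for a two-term symbol and a two-term polynomial, with the exponents of the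
result given by additive equations instead of truncated subtraction. -/
lemma fsToeplitz_two (m : ℕ) (c₁ c₂ d₁ d₂ : ℂ) (i₁ j₁ i₂ j₂ e₁ e₂ : ℕ)
    {r₁₁ r₁₂ r₂₁ r₂₂ : ℕ} (h₁₁ : r₁₁ + j₁ = i₁ + e₁) (h₁₂ : r₁₂ + j₁ = i₁ + e₂)
    (h₂₁ : r₂₁ + j₂ = i₂ + e₁) (h₂₂ : r₂₂ + j₂ = i₂ + e₂) :
    fsToeplitz m (fun w => c₁ * w ^ i₁ * (starRingEnd ℂ w) ^ j₁ +
        c₂ * w ^ i₂ * (starRingEnd ℂ w) ^ j₂) (fun w => d₁ * w ^ e₁ + d₂ * w ^ e₂) =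
    fun z => c₁ * d₁ * (((i₁ + e₁ + m).factorial : ℂ) / ((r₁₁ + m).factorial : ℂ)) * z ^ r₁₁ +
      c₁ * d₂ * (((i₁ + e₂ + m).factorial : ℂ) / ((r₁₂ + m).factorial : ℂ)) * z ^ r₁₂ +
      (c₂ * d₁ * (((i₂ + e₁ + m).factorial : ℂ) / ((r₂₁ + m).factorial : ℂ)) * z ^ r₂₁ +
      c₂ * d₂ * (((i₂ + e₂ + m).factorial : ℂ) / ((r₂₂ + m).factorial : ℂ)) * z ^ r₂₂) := by
  ext z
  have h := fsToeplitz_sum m ![c₁, c₂] ![i₁, i₂] ![j₁, j₂] ![d₁, d₂] ![e₁, e₂]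
    (by simp only [Fin.forall_fin_two]; simp; omega) z
  simp only [Fin.sum_univ_two, Matrix.cons_val_zero, Matrix.cons_val_one] at h
  rw [h, show i₁ + e₁ - j₁ = r₁₁ by omega, show i₁ + e₂ - j₁ = r₁₂ by omega,
    show i₂ + e₁ - j₂ = r₂₁ by omega, show i₂ + e₂ - j₂ = r₂₂ by omega]

lemma fsPair_four_two (m : ℕ) (c₁ c₂ c₃ c₄ d₁ d₂ : ℂ) (i₁ i₂ i₃ i₄ e₁ e₂ : ℕ) :
    fsPair m (fun z => c₁ * z ^ i₁ + c₂ * z ^ i₂ + (c₃ * z ^ i₃ + c₄ * z ^ i₄))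
      (fun z => d₁ * z ^ e₁ + d₂ * z ^ e₂) =
    ∑ x : Fin 4, ∑ y : Fin 2, ![c₁, c₂, c₃, c₄] x * starRingEnd ℂ (![d₁, d₂] y) *
      (if ![i₁, i₂, i₃, i₄] x = ![e₁, e₂] y then
        (Real.pi : ℂ) * ((![i₁, i₂, i₃, i₄] x + m).factorial : ℂ) else 0) := by
  rw [← fsPair_sum]
  congr 1
  · ext z
    simp [Fin.sum_univ_four]
    ring
  · ext z
    simp

theorem stmt17 (m p s t k n : ℕ) (hst : s < t) (hk1 : k > 2 * p)
    (hk2 : k > 2 * t) (hn : n = p) (a b : ℂ) (ha : a ≠ 0) (hb : b ≠ 0)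
    (φ : ℂ → ℂ) (hφ : φ = fun z => a * z ^ p * (starRingEnd ℂ z) ^ n + b * z ^ s * (starRingEnd ℂ z) ^ t)
    (hyp : fsPair m (fsToeplitz m φ (fsToeplitz m φ (fun w => w ^ k)))
        (fsToeplitz m φ (fun w => w ^ k)) =
      fsPair m (fsToeplitz m (fun w => starRingEnd ℂ (φ w)) (fsToeplitz m φ (fun w => w ^ k)))
        (fsToeplitz m (fun w => starRingEnd ℂ (φ w)) (fun w => w ^ k))) :
    ((p + k + m).factorial : ℝ) * ((t + k + m).factorial : ℝ) ^ 2
        / (((k + m).factorial : ℝ) * ((t + k + m - s).factorial : ℝ)) =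
      ((s + k + m).factorial : ℝ) ^ 2 * ((s + k + m + p - t).factorial : ℝ)
        / ((s + k + m - t).factorial : ℝ) ^ 2 := by
  subst hn
  obtain ⟨d, rfl⟩ : ∃ d, t = s + d := ⟨t - s, by omega⟩
  obtain ⟨q, rfl⟩ : ∃ q, k = q + d + d := ⟨k - d - d, by omega⟩
  have hd : d ≠ 0 := by omega
  have hconj : (fun w => starRingEnd ℂ (φ w)) = fun z =>
      starRingEnd ℂ a * z ^ n * (starRingEnd ℂ z) ^ n +
        starRingEnd ℂ b * z ^ (s + d) * (starRingEnd ℂ z) ^ s := by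
    ext z
    simp [hφ]
    ring
  -- The monomial is padded with a vanishing second term to fit the two-term lemma.
  have hmono : (fun w : ℂ => w ^ (q + d + d)) =
      fun w => 1 * w ^ (q + d + d) + 0 * w ^ (q + d + d) := by
    ext w
    simp
  have hT : fsToeplitz m φ (fun w => w ^ (q + d + d)) = fun z =>
      a * (((n + (q + d + d) + m).factorial : ℂ) / ((q + d + d + m).factorial : ℂ)) *
        z ^ (q + d + d) +
      b * (((s + (q + d + d) + m).factorial : ℂ) / ((q + d + m).factorial : ℂ)) *
        z ^ (q + d) := by
    rw [hmono, hφ, fsToeplitz_two m a b 1 0 n n s (s + d) _ _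
      (r₁₁ := q + d + d) (r₁₂ := q + d + d) (r₂₁ := q + d) (r₂₂ := q + d)
      (by omega) (by omega) (by omega) (by omega)]
    ext z
    ring
  have hT' : fsToeplitz m (fun w => starRingEnd ℂ (φ w)) (fun w => w ^ (q + d + d)) = fun z =>
      starRingEnd ℂ a * (((n + (q + d + d) + m).factorial : ℂ) / ((q + d + d + m).factorial : ℂ)) *
        z ^ (q + d + d) +
      starRingEnd ℂ b * (((s + d + (q + d + d) + m).factorial : ℂ) /
        ((q + d + d + d + m).factorial : ℂ)) * z ^ (q + d + d + d) := by
    rw [hmono, hconj, fsToeplitz_two m _ _ 1 0 n n (s + d) s _ _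
      (r₁₁ := q + d + d) (r₁₂ := q + d + d) (r₂₁ := q + d + d + d) (r₂₂ := q + d + d + d)
      (by omega) (by omega) (by omega) (by omega)]
    ext z
    ring
  rw [hT, hT', hconj, hφ, fsToeplitz_two m a b _ _ n n s (s + d) _ _
      (r₁₁ := q + d + d) (r₁₂ := q + d) (r₂₁ := q + d) (r₂₂ := q)
      (by omega) (by omega) (by omega) (by omega),
    fsToeplitz_two m _ _ _ _ n n (s + d) s _ _
      (r₁₁ := q + d + d) (r₁₂ := q + d) (r₂₁ := q + d + d + d) (r₂₂ := q + d + d)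
      (by omega) (by omega) (by omega) (by omega), fsPair_four_two, fsPair_four_two] at hyp
  simp [Fin.sum_univ_four, hd, add_assoc] at hyp
  rw [show s + (d + (q + (d + m))) = s + (q + (d + (d + m))) by omega] at hyp
  rw [show n + (q + d + d) + m = n + (q + (d + (d + m))) by omega,
    show s + d + (q + d + d) + m - s = q + (d + (d + (d + m))) by omega,
    show s + d + (q + d + d) + m = s + (d + (q + (d + (d + m)))) by omega,
    show q + d + d + m = q + (d + (d + m)) by omega,
    show s + (q + d + d) + m + n - (s + d) = n + (q + (d + m)) by omega,
    show s + (q + d + d) + m - (s + d) = q + (d + m) by omega,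
    show s + (q + d + d) + m = s + (q + (d + (d + m))) by omega]
  have hf : ∀ N : ℕ, (N.factorial : ℂ) ≠ 0 := fun N => by exact_mod_cast N.factorial_ne_zero
  have h1 := hf (q + (d + m))
  have h2 := hf (q + (d + (d + m)))
  have h3 := hf (q + (d + (d + (d + m))))
  have hpi : (Real.pi : ℂ) ≠ 0 := by exact_mod_cast Real.pi_ne_zero
  have hb' : starRingEnd ℂ b ≠ 0 := by simpa using hb
  apply Complex.ofReal_injective
  push_cast
  generalize ((q + (d + m)).factorial : ℂ) = F₁ at *
  generalize ((q + (d + (d + m))).factorial : ℂ) = F₂ at *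
  generalize ((q + (d + (d + (d + m)))).factorial : ℂ) = F₃ at *
  generalize ((n + (q + (d + m))).factorial : ℂ) = P₁ at *
  generalize ((n + (q + (d + (d + m)))).factorial : ℂ) = P₂ at *
  generalize ((s + (q + (d + (d + m)))).factorial : ℂ) = S at *
  generalize ((s + (d + (q + (d + (d + m))))).factorial : ℂ) = R at *
  field_simp at hyp ⊢
  -- The `|a|² a` terms agree on both sides of `hyp`, and so do the terms coming from lowering the
  -- degree by `d` and raising it again; what is left carries the factor `|b|²`.
  have hne : F₂ * b * starRingEnd ℂ b ≠ 0 := mul_ne_zero (mul_ne_zero h2 hb) hb'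
  apply mul_left_cancel₀ hne
  linear_combination -hyp
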